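/- arXiv:2105.02919 — 3 statements merged into one kernel-verified Lean document; each statement's English description precedes it below -/
import Mathlib

section
/- Let F be a finite field, let k ≥ 1, s ≥ 1 and t ≥ 1 be integers, and let p_1, …, p_s ∈ F^k be column vectors such that the k × (k+s) matrix G_0 = [I_k | p_1 | p_2 | ⋯ | p_s] generates a linear code of length k+s, dimension k and minimum Hamming distance exactly s+1 (an MDS code). Partition the index set {1,…,k} into t consecutive nonempty blocks B_1, …, B_t, and for each i let p_{1i} ∈ F^k be the vector that agrees with p_1 on B_i and is zero outside B_i. Form the k × (k+t+s−1) matrix G = [I_k | p_{11} | p_{12} | ⋯ | p_{1t} | p_2 | ⋯ | p_s]. Then the linear code {x·G : x ∈ F^k} has length k+t+s−1, dimension k, and minimum Hamming distance exactly s+1. -/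
open Matrix

/-!
The weight of `x ᵥ* G` is `wt x + ∑ j, [⟨x, p₁ⱼ⟩ ≠ 0] + ∑ j ≥ 2, [⟨x, pⱼ⟩ ≠ 0]`, and that of
`x ᵥ* G₀` is the same with the middle sum replaced by `[⟨x, p₁⟩ ≠ 0]`.

* Since `⟨x, p₁⟩ = ∑ j, ⟨x, p₁ⱼ⟩`, a nonzero `⟨x, p₁⟩` forces some `⟨x, p₁ⱼ⟩` to be nonzero, so
  splitting the column never decreases weights. This gives the lower bound, and
  injectivity follows because the code is systematic.
* A row of `G`, that is, `x` a standard basis vector, has one nonzero systematic coordinate, at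
  most one nonzero split parity (the one of its own block), and at most `s - 1` nonzero remaining
  parities. So its weight is at most `s + 1`, and hence equal to `s + 1`.
-/

theorem hammingNorm_eq_sum_ite {ι F : Type*} [Fintype ι] [Field F] [DecidableEq F] (v : ι → F) :
    hammingNorm v = ∑ i, if v i ≠ 0 then 1 else 0 := by
  simp [hammingNorm, Finset.card_filter]

/-- If the sum of a family is nonzero, at least one member is nonzero. -/
theorem ite_sum_ne_zero_le {ι F : Type*} [Fintype ι] [Field F] [DecidableEq F] (f : ι → F) :
    (if ∑ j, f j ≠ 0 then 1 else 0) ≤ ∑ j, if f j ≠ 0 then 1 else 0 := by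
  split_ifs with h
  · obtain ⟨j, -, hj⟩ := Finset.exists_ne_zero_of_sum_ne_zero h
    calc 1 = if f j ≠ 0 then 1 else 0 := by rw [if_pos hj]
      _ ≤ _ := Finset.single_le_sum (f := fun j => if f j ≠ 0 then 1 else 0)
          (fun _ _ => Nat.zero_le _) (Finset.mem_univ j)
  · exact Nat.zero_le _

/-- Splitting the first parity column of a systematic generator matrix
of an `[k+s, k, s+1]` MDS code into `t` block-supported columns (according to a partition
of the `k` information coordinates into `t` consecutive nonempty blocks) yields a pyramid
code of length `k + t + s - 1`, dimension `k`, and minimum Hamming distance exactly `s+1`. -/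
theorem pyramid_code_parameters
    (F : Type) [Field F] [Fintype F] [DecidableEq F]
    (k s t : ℕ) (hk : 1 ≤ k) (hs : 1 ≤ s) (ht : 1 ≤ t)
    (p : Fin s → Fin k → F)
    (G₀ : Matrix (Fin k) (Fin k ⊕ Fin s) F)
    (hG₀ : G₀ = Matrix.of fun i =>
      Sum.elim (fun j => if i = j then (1 : F) else 0) (fun j => p j i))
    (hdim₀ : Function.Injective fun x : Fin k → F => x ᵥ* G₀)
    (hdist₀_lower : ∀ x : Fin k → F, x ≠ 0 → s + 1 ≤ hammingNorm (x ᵥ* G₀))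
    (hdist₀_exact : ∃ x : Fin k → F, x ≠ 0 ∧ hammingNorm (x ᵥ* G₀) = s + 1)
    -- the partition of {1,…,k} into t consecutive nonempty blocks, encoded as a
    -- monotone surjection assigning each information coordinate its block index
    (blk : Fin k → Fin t) (hblk_mono : Monotone blk) (hblk_surj : Function.Surjective blk)
    (G : Matrix (Fin k) (Fin k ⊕ (Fin t ⊕ Fin (s - 1))) F)
    (hG : G = Matrix.of fun i =>
      Sum.elim (fun j => if i = j then (1 : F) else 0)
        (Sum.elim (fun j => if blk i = j then p ⟨0, by omega⟩ i else 0)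
          (fun j => p ⟨j.1 + 1, by have := j.isLt; omega⟩ i))) :
    Fintype.card (Fin k ⊕ (Fin t ⊕ Fin (s - 1))) = k + t + s - 1 ∧
    Function.Injective (fun x : Fin k → F => x ᵥ* G) ∧
    (∀ x : Fin k → F, x ≠ 0 → s + 1 ≤ hammingNorm (x ᵥ* G)) ∧
    (∃ x : Fin k → F, x ≠ 0 ∧ hammingNorm (x ᵥ* G) = s + 1) := by
  obtain ⟨s, rfl⟩ : ∃ r, s = r + 1 := ⟨s - 1, by omega⟩
  have w₀ : ∀ x : Fin k → F, hammingNorm (x ᵥ* G₀) = hammingNorm x +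
      ((if ∑ i, x i * p 0 i ≠ 0 then 1 else 0) +
        ∑ j : Fin s, if ∑ i, x i * p j.succ i ≠ 0 then 1 else 0) := by
    intro x
    rw [hammingNorm_eq_sum_ite, hammingNorm_eq_sum_ite, Fintype.sum_sum_type, Fin.sum_univ_succ]
    simp [hG₀, Matrix.vecMul, dotProduct]
  have w : ∀ x : Fin k → F, hammingNorm (x ᵥ* G) = hammingNorm x +
      ((∑ j : Fin t, if (∑ i, if blk i = j then x i * p 0 i else 0) ≠ 0 then 1 else 0) +
        ∑ j : Fin s, if ∑ i, x i * p j.succ i ≠ 0 then 1 else 0) := by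
    intro x
    rw [hammingNorm_eq_sum_ite, hammingNorm_eq_sum_ite, Fintype.sum_sum_type,
      Fintype.sum_sum_type]
    simp only [hG, Matrix.vecMul, dotProduct, Matrix.of_apply, Sum.elim_inl, Sum.elim_inr,
      mul_ite, mul_one, mul_zero, Finset.sum_ite_eq', Finset.mem_univ, if_true]
    rfl
  have lower : ∀ x : Fin k → F, x ≠ 0 → s + 1 + 1 ≤ hammingNorm (x ᵥ* G) := by
    intro x hx
    refine (hdist₀_lower x hx).trans ?_
    rw [w₀, w]
    have h := ite_sum_ne_zero_le fun j : Fin t => ∑ i, if blk i = j then x i * p 0 i else 0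
    -- the split parities add up to the original first parity
    rw [Finset.sum_comm] at h
    simp only [Finset.sum_ite_eq, Finset.mem_univ, if_true] at h
    gcongr
  refine ⟨?_, ?_, lower, ?_⟩
  · simp only [Fintype.card_sum, Fintype.card_fin]
    omega
  · intro x y hxy
    funext j
    simpa [hG, Matrix.vecMul, dotProduct] using congrFun hxy (Sum.inl j)
  · let a : Fin k := ⟨0, hk⟩
    have hx : (Pi.single a 1 : Fin k → F) ≠ 0 := by simp
    refine ⟨Pi.single a 1, hx, le_antisymm ?_ (lower _ hx)⟩
    rw [w]
    have h₁ : hammingNorm (Pi.single a 1 : Fin k → F) = 1 := by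
      simp [hammingNorm_eq_sum_ite, Pi.single_apply]
    have h₂ : (∑ j : Fin t, if (∑ i, if blk i = j then
        (Pi.single a 1 : Fin k → F) i * p 0 i else 0) ≠ 0 then 1 else 0) ≤ 1 := by
      calc _ ≤ ∑ j : Fin t, if blk a = j then 1 else 0 := by
            refine Finset.sum_le_sum fun j _ => ?_
            by_cases hj : blk a = j
            · rw [if_pos hj]
              split_ifs <;> simp
            · rw [if_neg, if_neg hj]
              rw [not_not]
              refine Finset.sum_eq_zero fun i _ => ?_
              by_cases hi : i = a
              · rw [hi, if_neg hj]
              · simp [Pi.single_eq_of_ne hi]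
        _ = 1 := by simp
    have h₃ : (∑ j : Fin s, if ∑ i, (Pi.single a 1 : Fin k → F) i * p j.succ i ≠ 0
        then 1 else 0) ≤ s := by
      calc _ ≤ ∑ _j : Fin s, 1 := Finset.sum_le_sum fun j _ => by split_ifs <;> simp
        _ = s := by simp
    omega
end

section
/- Let F be a finite field and let G be the k × (k+t+s−1) pyramid generator matrix obtained as follows: p_1,…,p_s ∈ F^k are such that [I_k | p_1 | ⋯ | p_s] generates a code of length k+s, dimension k, and minimum Hamming distance s+1; {1,…,k} is partitioned into t consecutive nonempty blocks; p_1 is split into the t block-supported columns p_{11},…,p_{1t}; and G = [I_k | p_{11} | ⋯ | p_{1t} | p_2 | ⋯ | p_s]. Then the pyramid code corrects any s erasures: for every subset T of the coordinate set {1,…,k+t+s−1} with |T| = s, the map sending a message x ∈ F^k to the restriction of the codeword x·G to the coordinates outside T is injective. -/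
/-!
By linearity it suffices that no nonzero `z` has `z ᵥ* G` supported in `T`. Merging the `t` block
parities into a single coordinate, by adding them, turns `z ᵥ* G` into `z ᵥ* G₀`. A nonzero sum
has a nonzero summand, so the support of `z ᵥ* G₀` is contained in the image of the support of
`z ᵥ* G` under the merging map of coordinates. Hence the weight of `z ᵥ* G₀` is at most `#T = s`,
against the minimum distance `s + 1`.
-/


open Matrix

/-- The pyramid code obtained by splitting the first parity column of an
`[k+s, k, s+1]` MDS code into `t` block-supported parity columns corrects any `s` erasures:
for every set `T` of `s` coordinates, a codeword is uniquely determined by (i.e. the encoding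
map is injective when restricted to) the coordinates outside `T`. -/
theorem pyramid_code_corrects_s_erasures
    (F : Type) [Field F] [Fintype F] [DecidableEq F]
    (k s t : ℕ) (hk : 1 ≤ k) (hs : 1 ≤ s) (ht : 1 ≤ t)
    (p : Fin s → Fin k → F)
    (G₀ : Matrix (Fin k) (Fin k ⊕ Fin s) F)
    (hG₀ : G₀ = Matrix.of fun i =>
      Sum.elim (fun j => if i = j then (1 : F) else 0) (fun j => p j i))
    (hdim₀ : Function.Injective fun x : Fin k → F => x ᵥ* G₀)
    (hdist₀_lower : ∀ x : Fin k → F, x ≠ 0 → s + 1 ≤ hammingNorm (x ᵥ* G₀))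
    (hdist₀_exact : ∃ x : Fin k → F, x ≠ 0 ∧ hammingNorm (x ᵥ* G₀) = s + 1)
    -- the partition of {1,…,k} into t consecutive nonempty blocks, encoded as a
    -- monotone surjection assigning each information coordinate its block index
    (blk : Fin k → Fin t) (hblk_mono : Monotone blk) (hblk_surj : Function.Surjective blk)
    (G : Matrix (Fin k) (Fin k ⊕ (Fin t ⊕ Fin (s - 1))) F)
    (hG : G = Matrix.of fun i =>
      Sum.elim (fun j => if i = j then (1 : F) else 0)
        (Sum.elim (fun j => if blk i = j then p ⟨0, by omega⟩ i else 0)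
          (fun j => p ⟨j.1 + 1, by have := j.isLt; omega⟩ i))) :
    ∀ T : Finset (Fin k ⊕ (Fin t ⊕ Fin (s - 1))), T.card = s →
      Function.Injective fun x : Fin k → F =>
        (fun j : {j // j ∉ T} => (x ᵥ* G) j.1) := by
  intro T hT x y hxy
  -- the columns of `G` merge into the columns of `G₀`: all blocks go to the first parity
  let g : Fin k ⊕ (Fin t ⊕ Fin (s - 1)) → Fin k ⊕ Fin s :=
    Sum.elim Sum.inl (Sum.elim (fun _ => Sum.inr ⟨0, by omega⟩)
      (fun j => Sum.inr ⟨j.1 + 1, by have := j.isLt; omega⟩))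
  by_contra hne
  have hzero : ∀ d, d ∉ T → ((x - y) ᵥ* G) d = 0 := fun d hd => by
    rw [Matrix.sub_vecMul, Pi.sub_apply, sub_eq_zero]
    exact congrFun hxy ⟨d, hd⟩
  have hz := hdist₀_lower (x - y) (sub_ne_zero.mpr hne)
  generalize x - y = z at hz hzero
  -- a nonzero coordinate of `z ᵥ* G₀` has a nonzero coordinate of `z ᵥ* G` above it
  have hlift : ∀ c, (z ᵥ* G₀) c ≠ 0 → ∃ d, g d = c ∧ (z ᵥ* G) d ≠ 0 := by
    rintro (i | ⟨n, hn⟩) hc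
    · refine ⟨Sum.inl i, rfl, ?_⟩
      simpa [hG₀, hG, Matrix.vecMul, dotProduct] using hc
    · rcases n with _ | n
      · have hsum : (z ᵥ* G₀) (Sum.inr ⟨0, hn⟩) =
            ∑ j, (z ᵥ* G) (Sum.inr (Sum.inl j)) := by
          simp only [hG₀, hG, Matrix.vecMul, dotProduct, Matrix.of_apply, Sum.elim_inr,
            Sum.elim_inl]
          rw [Finset.sum_comm]
          simp
        rw [hsum] at hc
        obtain ⟨j, -, hj⟩ := Finset.exists_ne_zero_of_sum_ne_zero hc
        exact ⟨Sum.inr (Sum.inl j), rfl, hj⟩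
      · refine ⟨Sum.inr (Sum.inr ⟨n, by omega⟩), rfl, ?_⟩
        simpa [hG₀, hG, Matrix.vecMul, dotProduct] using hc
  have hle : hammingNorm (z ᵥ* G₀) ≤ (T.image g).card := by
    refine Finset.card_le_card fun c hc => ?_
    obtain ⟨d, rfl, hd⟩ := hlift c (Finset.mem_filter.mp hc).2
    exact Finset.mem_image_of_mem g (by_contra fun h => hd (hzero d h))
  have hcard : (T.image g).card ≤ T.card := Finset.card_image_le
  omega
end

section
/- Let F be a field and let x_1,…,x_k, y_1,…,y_s ∈ F be such that the x_i are pairwise distinct, the y_j are pairwise distinct, and x_i ≠ y_j for all i, j. Let C be the k × s Cauchy matrix with entries C_{ij} = (x_i − y_j)^{−1}. Then the linear code generated by the k × (k+s) matrix [I_k | C] has length k+s, dimension k, and minimum Hamming distance exactly s+1; that is, it is an MDS code. -/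
/-!
The codeword of `v` is `(v, v ᵥ* C)`. If `v` has support `S` of size `t ≥ 1`, then clearing
denominators in `∑ i ∈ S, v i / (x i - z)` gives a polynomial in `z` of degree at most `t - 1`
(`cauchyNumerator`). It is nonzero at each `x i` with `i ∈ S`, and it vanishes at each `y j` for
which `(v ᵥ* C) j = 0`. So fewer than `t` coordinates of `v ᵥ* C` vanish (`card_zeros_lt`), and
the weight of the codeword is at least `t + (s - (t - 1)) = s + 1`. Every row of `[I | C]` attains
this bound, because a Cauchy matrix has no zero entry.
-/

open Matrix

/-- The numerator of `∑ i ∈ S, v i / (x i - X)` over the common denominator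
`∏ i ∈ S, (x i - X)`. -/
noncomputable def cauchyNumerator {F ι : Type*} [Field F] [DecidableEq ι]
    (S : Finset ι) (v x : ι → F) : Polynomial F :=
  ∑ i ∈ S, Polynomial.C (v i) * ∏ l ∈ S.erase i, (Polynomial.C (x l) - Polynomial.X)

lemma natDegree_cauchyNumerator_le {F ι : Type*} [Field F] [DecidableEq ι]
    (S : Finset ι) (v x : ι → F) :
    (cauchyNumerator S v x).natDegree ≤ S.card - 1 := by
  refine Polynomial.natDegree_sum_le_of_forall_le _ _ fun i hi => ?_
  refine (Polynomial.natDegree_C_mul_le _ _).trans ?_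
  refine (Polynomial.natDegree_prod_le _ _).trans ?_
  rw [← Finset.card_erase_of_mem hi, Finset.card_eq_sum_ones]
  refine Finset.sum_le_sum fun l _ => ?_
  refine (Polynomial.natDegree_sub_le _ _).trans ?_
  simp

lemma eval_cauchyNumerator {F ι : Type*} [Field F] [DecidableEq ι]
    (S : Finset ι) (v x : ι → F) (z : F) (hz : ∀ i ∈ S, x i ≠ z) :
    (cauchyNumerator S v x).eval z = (∏ i ∈ S, (x i - z)) * ∑ i ∈ S, v i * (x i - z)⁻¹ := by
  simp only [cauchyNumerator, Polynomial.eval_finsetSum, Polynomial.eval_mul,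
    Polynomial.eval_prod, Polynomial.eval_sub, Polynomial.eval_C, Polynomial.eval_X,
    Finset.mul_sum]
  refine Finset.sum_congr rfl fun i hi => ?_
  have h : x i - z ≠ 0 := sub_ne_zero.2 (hz i hi)
  rw [← Finset.mul_prod_erase S _ hi]
  field_simp

lemma cauchyNumerator_ne_zero {F ι : Type*} [Field F] [DecidableEq ι]
    (S : Finset ι) (v x : ι → F) (hx : Function.Injective x)
    {i : ι} (hi : i ∈ S) (hv : v i ≠ 0) : cauchyNumerator S v x ≠ 0 := by
  intro h0
  have h := congrArg (Polynomial.eval (x i)) h0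
  simp only [cauchyNumerator, Polynomial.eval_finsetSum, Polynomial.eval_mul,
    Polynomial.eval_prod, Polynomial.eval_sub, Polynomial.eval_C, Polynomial.eval_X,
    Polynomial.eval_zero] at h
  -- At `x i` every summand but the `i`-th contains the vanishing factor `x i - x i`.
  rw [Finset.sum_eq_single_of_mem i hi fun l _ hl => by
    rw [Finset.prod_eq_zero (Finset.mem_erase.2 ⟨hl.symm, hi⟩) (sub_self _), mul_zero]] at h
  refine mul_ne_zero hv (Finset.prod_ne_zero_iff.2 fun l hl => ?_) h
  exact sub_ne_zero.2 (hx.ne (Finset.ne_of_mem_erase hl))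

/-- A nonzero combination of the rows of a Cauchy matrix has fewer zero coordinates than nonzero
coefficients. -/
lemma card_zeros_lt {F ι κ : Type*} [Field F] [DecidableEq F] [Fintype ι] [DecidableEq ι]
    [Fintype κ] (x : ι → F) (y : κ → F)
    (hx : Function.Injective x) (hy : Function.Injective y) (hxy : ∀ i j, x i ≠ y j)
    (v : ι → F) (hv : v ≠ 0) :
    (Finset.univ.filter fun j => ∑ i, v i * (x i - y j)⁻¹ = 0).card
      < (Finset.univ.filter fun i => v i ≠ 0).card := by
  obtain ⟨i, hi⟩ := Function.ne_iff.1 hv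
  set S := Finset.univ.filter fun i => v i ≠ 0 with hS
  have hiS : i ∈ S := by simpa [hS] using hi
  have hpos : 0 < S.card := Finset.card_pos.2 ⟨i, hiS⟩
  by_contra! hle
  refine cauchyNumerator_ne_zero S v x hx hiS hi ?_
  refine Polynomial.eq_zero_of_natDegree_lt_card_of_eval_eq_zero' _
    ((Finset.univ.filter fun j => ∑ i, v i * (x i - y j)⁻¹ = 0).image y) ?_ ?_
  · intro z hz
    obtain ⟨j, hj, rfl⟩ := Finset.mem_image.1 hz
    have hsum : ∑ i ∈ S, v i * (x i - y j)⁻¹ = 0 := by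
      rw [← (Finset.mem_filter.1 hj).2]
      refine Finset.sum_subset (Finset.subset_univ _) fun l _ hl => ?_
      have : v l = 0 := by simpa [hS] using hl
      rw [this, zero_mul]
    rw [eval_cauchyNumerator S v x (y j) fun i _ => hxy i j, hsum, mul_zero]
  · rw [Finset.card_image_of_injective _ hy]
    have := natDegree_cauchyNumerator_le S v x
    omega

lemma hammingNorm_sum_type {F ι κ : Type*} [Field F] [DecidableEq F] [Fintype ι] [Fintype κ]
    (w : ι ⊕ κ → F) :
    hammingNorm w = hammingNorm (fun i => w (Sum.inl i)) +
      hammingNorm (fun j => w (Sum.inr j)) := by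
  simp only [hammingNorm, Finset.card_filter, Fintype.sum_sum_type]

/-- The systematic code generated by `[I_k | C]`, where `C` is a `k × s`
Cauchy matrix, is an MDS code: it has length `k+s`, dimension `k`, and minimum Hamming
distance exactly `s+1`. -/
theorem cauchy_systematic_code_is_MDS
    (F : Type) [Field F] [DecidableEq F]
    (k s : ℕ) (hk : 1 ≤ k)
    (x : Fin k → F) (y : Fin s → F)
    (hx : Function.Injective x) (hy : Function.Injective y)
    (hxy : ∀ i j, x i ≠ y j)
    (C : Matrix (Fin k) (Fin s) F) (hC : C = Matrix.of fun i j => (x i - y j)⁻¹)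
    (G : Matrix (Fin k) (Fin k ⊕ Fin s) F)
    (hG : G = Matrix.of fun i =>
      Sum.elim (fun j => if i = j then (1 : F) else 0) (fun j => C i j)) :
    Fintype.card (Fin k ⊕ Fin s) = k + s ∧
    Function.Injective (fun v : Fin k → F => v ᵥ* G) ∧
    (∀ v : Fin k → F, v ≠ 0 → s + 1 ≤ hammingNorm (v ᵥ* G)) ∧
    (∃ v : Fin k → F, v ≠ 0 ∧ hammingNorm (v ᵥ* G) = s + 1) := by
  have hl : ∀ (v : Fin k → F) i, (v ᵥ* G) (Sum.inl i) = v i := by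
    intro v i
    simp [hG, Matrix.vecMul, dotProduct]
  have hr : ∀ (v : Fin k → F) j,
      (v ᵥ* G) (Sum.inr j) = ∑ i, v i * (x i - y j)⁻¹ := by
    intro v j
    simp [hG, hC, Matrix.vecMul, dotProduct]
  have hw : ∀ v : Fin k → F, hammingNorm (v ᵥ* G)
      = hammingNorm v + hammingNorm (fun j => ∑ i, v i * (x i - y j)⁻¹) := by
    intro v
    rw [hammingNorm_sum_type]
    simp only [hl, hr]
  refine ⟨by simp, ?_, ?_, ?_⟩
  · intro v w h
    funext i
    rw [← hl v i, ← hl w i]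
    exact congrFun h _
  · intro v hv
    have hlt := card_zeros_lt x y hx hy hxy v hv
    have hadd := Finset.card_filter_add_card_filter_not (s := (Finset.univ : Finset (Fin s)))
      (fun j => ∑ i, v i * (x i - y j)⁻¹ = 0)
    rw [Finset.card_univ, Fintype.card_fin] at hadd
    rw [hw]
    simp only [hammingNorm, ne_eq] at hlt ⊢
    omega
  · refine ⟨Pi.single ⟨0, hk⟩ 1, by simp, ?_⟩
    rw [hw]
    have hne : ∀ j, x ⟨0, hk⟩ - y j ≠ 0 := fun j => sub_ne_zero.2 (hxy _ j)
    simp [hammingNorm, Pi.single_apply, hne, Finset.filter_eq', add_comm]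
end
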